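/- arXiv:2304.11804 — 2 statements merged into one kernel-verified Lean document; each statement's English description precedes it below -/
import Mathlib

section
/- Let k be a positive natural number, let M be the 4×4 integer matrix with rows (1, −3, −1, −1), (0, 1, 0, 0), (0, 0, 1, 0), (0, 0, 0, 1), and let f : (Fin 4 → ℤ) → (Fin 4 → ℤ) be the linear map determined by the matrix M^k − 1. Then the quotient additive group (Fin 4 → ℤ) ⧸ range(f) is isomorphic, as an additive group, to ZMod k × (ℤ × ℤ × ℤ). -/
theorem aux_pow (k : ℕ) :
    (!![1, -3, -1, -1; 0, 1, 0, 0; 0, 0, 1, 0; 0, 0, 0, 1] : Matrix (Fin 4) (Fin 4) ℤ) ^ k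
      = !![1, -3 * (k : ℤ), -(k : ℤ), -(k : ℤ); 0, 1, 0, 0; 0, 0, 1, 0; 0, 0, 0, 1] := by
  induction k with
  | zero => ext i j; fin_cases i <;> fin_cases j <;> simp
  | succ n ih =>
    rw [pow_succ, ih]
    ext i j
    fin_cases i <;> fin_cases j <;> simp [Matrix.mul_apply, Fin.sum_univ_four] <;> ring

def auxHom (k : ℕ) : (Fin 4 → ℤ) →+ ZMod k × (ℤ × ℤ × ℤ) where
  toFun v := ((v 0 : ZMod k), (v 1, v 2, v 3))
  map_zero' := by simp
  map_add' a b := by simp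

theorem aux_range (k : ℕ) :
    LinearMap.range (Matrix.toLin'
            ((!![1, -3, -1, -1; 0, 1, 0, 0; 0, 0, 1, 0; 0, 0, 0, 1] :
                Matrix (Fin 4) (Fin 4) ℤ) ^ k - 1))
      = LinearMap.ker (auxHom k).toIntLinearMap := by
  have key : ∀ w : Fin 4 → ℤ, Matrix.toLin'
            ((!![1, -3, -1, -1; 0, 1, 0, 0; 0, 0, 1, 0; 0, 0, 0, 1] :
                Matrix (Fin 4) (Fin 4) ℤ) ^ k - 1) w
      = ![(k : ℤ) * (-3 * w 1 - w 2 - w 3), 0, 0, 0] := by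
    intro w
    rw [aux_pow]
    ext i
    fin_cases i <;>
      simp [Matrix.toLin'_apply, Matrix.sub_mulVec, Matrix.mulVec, dotProduct, Fin.sum_univ_four]
    ring
  ext v
  rw [LinearMap.mem_range, LinearMap.mem_ker]
  constructor
  · rintro ⟨w, rfl⟩
    rw [key]
    simp [auxHom]
  · intro h
    simp only [auxHom, AddMonoidHom.coe_toIntLinearMap, AddMonoidHom.coe_mk, ZeroHom.coe_mk,
      Prod.mk_eq_zero] at h
    obtain ⟨h0, h1, h2, h3⟩ := h
    obtain ⟨c, hc⟩ := (ZMod.intCast_zmod_eq_zero_iff_dvd _ _).1 h0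
    refine ⟨![0, 0, 0, -c], ?_⟩
    rw [key]
    ext i
    fin_cases i <;> simp [hc, h1, h2, h3]

/-- For a positive natural number `k`, with `M` the 4×4 integer matrix with rows
`(1, −3, −1, −1)`, `(0, 1, 0, 0)`, `(0, 0, 1, 0)`, `(0, 0, 0, 1)`, the quotient of `Fin 4 → ℤ`
by the range of the linear map given by the matrix `M ^ k - 1` is isomorphic, as an additive
group, to `ZMod k × (ℤ × ℤ × ℤ)`. -/
theorem quotient_range_pow_sub_one_four (k : ℕ) (hk : 0 < k) :
    Nonempty
      (((Fin 4 → ℤ) ⧸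
          LinearMap.range (Matrix.toLin'
            ((!![1, -3, -1, -1; 0, 1, 0, 0; 0, 0, 1, 0; 0, 0, 0, 1] :
                Matrix (Fin 4) (Fin 4) ℤ) ^ k - 1))) ≃+
        (ZMod k × (ℤ × ℤ × ℤ))) := by
  have hs : Function.Surjective (auxHom k).toIntLinearMap := by
    rintro ⟨a, b, c, d⟩
    obtain ⟨z, rfl⟩ := ZMod.intCast_surjective a
    exact ⟨![z, b, c, d], by simp [auxHom]⟩
  exact ⟨((Submodule.quotEquivOfEq _ _ (aux_range k)).trans
    ((auxHom k).toIntLinearMap.quotKerEquivOfSurjective hs)).toAddEquiv⟩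
end

section
/- Let A = !![8, 3; -3, -1] be the 2×2 integer matrix with rows (8, 3) and (−3, −1). Then the function k ↦ |det(A^k − 1)| (natural absolute value of the determinant over ℤ) is strictly monotone increasing on the positive integers, and |det(A^k − 1)| tends to infinity as k → ∞. -/
open Filter

lemma pow_form_aux (k : ℕ) : ∃ a b : ℤ,
    (!![8, 3; -3, -1] : Matrix (Fin 2) (Fin 2) ℤ) ^ k = !![a, b; -b, a - 3 * b] ∧
    0 ≤ b ∧ 2 * b + 1 ≤ a ∧ a * (a - 3 * b) + b * b = 1 := by
  induction k with
  | zero =>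
    refine ⟨1, 0, ?_, by norm_num, by norm_num, by norm_num⟩
    ext i j; fin_cases i <;> fin_cases j <;> simp
  | succ k ih =>
    obtain ⟨a, b, h, hb, ha, hd⟩ := ih
    refine ⟨8 * a - 3 * b, 3 * a - b, ?_, by linarith, by linarith, by linarith⟩
    rw [pow_succ, h]
    ext i j; fin_cases i <;> fin_cases j <;> simp [Matrix.mul_apply, Fin.sum_univ_two] <;> ring

lemma det_form_aux (a b : ℤ) (hd : a * (a - 3 * b) + b * b = 1) :
    ((!![a, b; -b, a - 3 * b] : Matrix (Fin 2) (Fin 2) ℤ) - 1).det = 2 - (2 * a - 3 * b) := by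
  rw [Matrix.det_fin_two]
  simp
  linarith

lemma strictMono_aux : StrictMono
    (fun k : ℕ => (((!![8, 3; -3, -1] : Matrix (Fin 2) (Fin 2) ℤ) ^ k - 1).det).natAbs) := by
  refine strictMono_nat_of_lt_succ fun k => ?_
  obtain ⟨a, b, h, hb, ha, hd⟩ := pow_form_aux k
  have h2 : (!![8, 3; -3, -1] : Matrix (Fin 2) (Fin 2) ℤ) ^ (k + 1) =
      !![8 * a - 3 * b, 3 * a - b; -(3 * a - b), (8 * a - 3 * b) - 3 * (3 * a - b)] := by
    rw [pow_succ, h]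
    ext i j; fin_cases i <;> fin_cases j <;> simp [Matrix.mul_apply, Fin.sum_univ_two] <;> ring
  rw [h2, h, det_form_aux _ _ hd, det_form_aux _ _ (by linarith)]
  omega

/-- For `A = !![8, 3; -3, -1]` over `ℤ`, the function `k ↦ |det (A ^ k - 1)|` is strictly
monotone on the positive integers, and tends to infinity as `k → ∞`. -/
theorem natAbs_det_pow_sub_one_strictMonoOn_and_tendsto_atTop :
    StrictMonoOn
      (fun k : ℕ => (((!![8, 3; -3, -1] : Matrix (Fin 2) (Fin 2) ℤ) ^ k - 1).det).natAbs)
      (Set.Ici 1) ∧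
    Tendsto
      (fun k : ℕ => (((!![8, 3; -3, -1] : Matrix (Fin 2) (Fin 2) ℤ) ^ k - 1).det).natAbs)
      atTop atTop :=
  ⟨strictMono_aux.strictMonoOn _, strictMono_aux.tendsto_atTop⟩
end
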